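/- Under the definitions below, for every k the SINR of the private stream at user k defined from the quantized received signal after successive interference cancellation of the common stream, γ_k^{orig} = P α_{ADC,k}² |h_k^H Φ_α f_k|² / (P α_{ADC,k}² Σ_{i=1, i≠k}^K |h_k^H Φ_α f_i|² + QE_k + α_{ADC,k}² σ²), equals the reformulated expression γ_k(F) = α_{ADC,k} |h_k^H Φ_α f_k|² / (Σ_{i=0}^K |h_k^H Φ_α f_i|² − α_{ADC,k}(|h_k^H Φ_α f_k|² + |h_k^H Φ_α f_0|²) + Σ_{i=0}^K f_i^H Φ_α Φ_β diag(h_k h_k^H) f_i + σ²/P). -/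

import Mathlib

open Matrix

/-- `diagOf M` is the diagonal matrix whose diagonal coincides with that of `M`. -/
def diagOf {N : ℕ} (M : Matrix (Fin N) (Fin N) ℂ) : Matrix (Fin N) (Fin N) ℂ :=
  Matrix.diagonal fun n => M n n

/-- `outer u = u uᴴ`. -/
def outer {N : ℕ} (u : Fin N → ℂ) : Matrix (Fin N) (Fin N) ℂ :=
  Matrix.vecMulVec u (star u)

/-- The quadratic form of `A * Aᴴ` is the sum of the squared moduli of the correlations with the
columns of `A`. -/
theorem star_dotProduct_mul_conjTranspose_mulVec {m n : Type*} [Fintype m] [Fintype n]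
    (A : Matrix m n ℂ) (u : m → ℂ) :
    star u ⬝ᵥ (A * Aᴴ) *ᵥ u = ((∑ i, Complex.normSq (star u ⬝ᵥ A.col i) : ℝ) : ℂ) := by
  rw [← mulVec_mulVec, dotProduct_mulVec, dotProduct, Complex.ofReal_sum]
  refine Finset.sum_congr rfl fun i _ => ?_
  have hstar : (Aᴴ *ᵥ u) i = star (star u ⬝ᵥ A.col i) := by
    simp [mulVec, dotProduct, mul_comm]
  rw [hstar, ← Complex.mul_conj]
  rfl

/-- Exchanging the roles of the columns of `F` and of `u` in a diagonally weighted quadratic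
form. -/
theorem star_dotProduct_diagonal_mul_diagOf_mulVec {N : ℕ} {n : Type*} [Fintype n]
    (d : Fin N → ℂ) (c : ℂ) (F : Matrix (Fin N) n ℂ) (u : Fin N → ℂ) :
    star u ⬝ᵥ (diagonal d * diagOf (c • (F * Fᴴ))) *ᵥ u =
      c * ∑ i, star (F.col i) ⬝ᵥ (diagonal d * diagOf (outer u)) *ᵥ F.col i := by
  simp only [diagOf, outer, diagonal_mul_diagonal, dotProduct, mulVec_diagonal, vecMulVec_apply,
    Matrix.smul_apply, mul_apply, conjTranspose_apply, Pi.star_apply, col_apply,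
    smul_eq_mul, Finset.mul_sum, Finset.sum_mul]
  rw [Finset.sum_comm]
  exact Finset.sum_congr rfl fun i _ => Finset.sum_congr rfl fun j _ => by ring

/-- The SINR of the private stream at user `k`, defined from the quantized received signal after
SIC of the common stream, equals the reformulated expression `γ_k(F)` of the paper. -/
theorem private_stream_sinr_reformulation
    (N K : ℕ) (hN : 0 < N) (hK : 0 < K)
    (h : Fin K → Fin N → ℂ) (f : Fin (K + 1) → Fin N → ℂ)
    (F : Matrix (Fin N) (Fin (K + 1)) ℂ) (hF : ∀ n i, F n i = f i n)
    (αD : Fin N → ℝ) (hαD : ∀ n, αD n ∈ Set.Ioc (0 : ℝ) 1)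
    (αA : Fin K → ℝ) (hαA : ∀ k, αA k ∈ Set.Ioc (0 : ℝ) 1)
    (βA : Fin K → ℝ) (hβA : ∀ k, βA k = 1 - αA k)
    (P σ2 : ℝ) (hP : 0 < P) (hσ2 : 0 < σ2)
    (Φα Φβ : Matrix (Fin N) (Fin N) ℂ)
    (hΦα : Φα = Matrix.diagonal fun n => (αD n : ℂ))
    (hΦβ : Φβ = 1 - Φα)
    (RqDAC Cx : Matrix (Fin N) (Fin N) ℂ)
    (hR : RqDAC = Φα * Φβ * diagOf ((P : ℂ) • (F * Fᴴ)))
    (hC : Cx = (P : ℂ) • (Φα * F * Fᴴ * Φαᴴ) + RqDAC)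
    (rqADC QE : Fin K → ℂ)
    (hrq : ∀ k, rqADC k = ((αA k * βA k : ℝ) : ℂ) *
      (star (h k) ⬝ᵥ Cx.mulVec (h k) + (σ2 : ℂ)))
    (hQE : ∀ k, QE k = ((αA k ^ 2 : ℝ) : ℂ) *
      (star (h k) ⬝ᵥ RqDAC.mulVec (h k)) + rqADC k) :
    ∀ k : Fin K,
      ((P * αA k ^ 2 * Complex.normSq (star (h k) ⬝ᵥ Φα.mulVec (f k.succ)) : ℝ) : ℂ) /
          (((P * αA k ^ 2 *
              ∑ i ∈ Finset.univ.erase k,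
                Complex.normSq (star (h k) ⬝ᵥ Φα.mulVec (f i.succ)) : ℝ) : ℂ)
            + QE k + ((αA k ^ 2 * σ2 : ℝ) : ℂ)) =
        ((αA k * Complex.normSq (star (h k) ⬝ᵥ Φα.mulVec (f k.succ)) : ℝ) : ℂ) /
          (((∑ i : Fin (K + 1), Complex.normSq (star (h k) ⬝ᵥ Φα.mulVec (f i)) : ℝ) : ℂ)
            - ((αA k * (Complex.normSq (star (h k) ⬝ᵥ Φα.mulVec (f k.succ))
                + Complex.normSq (star (h k) ⬝ᵥ Φα.mulVec (f 0))) : ℝ) : ℂ)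
            + (∑ i : Fin (K + 1),
                star (f i) ⬝ᵥ (Φα * Φβ * diagOf (outer (h k))).mulVec (f i))
            + ((σ2 / P : ℝ) : ℂ)) := by
  intro k
  have hcol : ∀ i, F.col i = f i := fun i => funext fun n => hF n i
  have hmulcol : ∀ i, (Φα * F).col i = Φα *ᵥ f i := fun i => by
    rw [← hcol i]
    rfl
  have hΦ : Φα * Φβ = diagonal fun n => (αD n : ℂ) * (1 - αD n) := by
    rw [hΦβ, hΦα, ← diagonal_one, diagonal_sub, diagonal_mul_diagonal]
  have hquadR : star (h k) ⬝ᵥ RqDAC *ᵥ h k =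
      P * ∑ i, star (f i) ⬝ᵥ (Φα * Φβ * diagOf (outer (h k))) *ᵥ f i := by
    rw [hR, hΦ, star_dotProduct_diagonal_mul_diagOf_mulVec]
    simp only [hcol]
  have hquadC : star (h k) ⬝ᵥ Cx *ᵥ h k =
      P * ((∑ i, Complex.normSq (star (h k) ⬝ᵥ Φα *ᵥ f i) : ℝ) : ℂ)
        + star (h k) ⬝ᵥ RqDAC *ᵥ h k := by
    rw [hC, add_mulVec, dotProduct_add, smul_mulVec, dotProduct_smul, smul_eq_mul,
      Matrix.mul_assoc (Φα * F), ← conjTranspose_mul, star_dotProduct_mul_conjTranspose_mulVec]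
    simp only [hmulcol]
  have hsplit : ∑ i ∈ Finset.univ.erase k, Complex.normSq (star (h k) ⬝ᵥ Φα *ᵥ f i.succ) =
      (∑ i, Complex.normSq (star (h k) ⬝ᵥ Φα *ᵥ f i))
        - Complex.normSq (star (h k) ⬝ᵥ Φα *ᵥ f 0)
        - Complex.normSq (star (h k) ⬝ᵥ Φα *ᵥ f k.succ) := by
    rw [Fin.sum_univ_succ, ← Finset.add_sum_erase _ _ (Finset.mem_univ k)]
    ring
  have hP0 : (P : ℂ) ≠ 0 := Complex.ofReal_ne_zero.mpr hP.ne'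
  have hα0 : (αA k : ℂ) ≠ 0 := Complex.ofReal_ne_zero.mpr (hαA k).1.ne'
  rw [hQE, hrq, hquadC, hquadR, hβA, hsplit]
  refine Eq.trans ?_ (mul_div_mul_left _ _ (mul_ne_zero hP0 hα0))
  push_cast
  congr 1
  · ring
  · field_simp
    ring
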